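/- arXiv:1902.10373 — 2 statements merged into one kernel-verified Lean document; each statement's English description precedes it below -/
import Mathlib

section
/- Let p/q ∈ ℚ ∩ (0,1) have reduced regular continued fraction expansion [a_1, a_2, …, a_n] (so a_i ≥ 1 for all i and a_n ≥ 2). Then the unique binary word w with k(w) = p/q in the Kepler tree is w = 0^{a_n−2} 1 0^{a_{n−1}−1} 1 ⋯ 1 0^{a_2−1} 1 0^{a_1−1}, and the length of w (the level of the Kepler tree at which p/q occurs) equals a_1 + a_2 + ⋯ + a_n − 2. Equivalently, in terms of continued fractions, moving to the left child replaces [a_1, a_2, …, a_n] by [a_1+1, a_2, …, a_n] and moving to the right child replaces it by [1, a_1, a_2, …, a_n]. -/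
/-- Value of a finite regular continued fraction
`[a₁, a₂, …, aₙ] = 1/(a₁ + 1/(a₂ + ⋯ + 1/aₙ))`. -/
def cfvQ : List ℕ → ℚ
  | [] => 0
  | a :: t => 1 / (a + cfvQ t)

/-- The Kepler tree rule: if a node carries the rational `r = p/q` (in lowest terms), then
its left child carries `r/(r+1) = p/(p+q)` and its right child carries `1/(r+1) = q/(p+q)`.
(`false` = left child, `true` = right child.) -/
def keplerStep (r : ℚ) (b : Bool) : ℚ := if b then 1 / (r + 1) else r / (r + 1)

/-- The rational at the node of the Kepler tree indexed by the binary word `w`: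
the root `1/2` is indexed by the empty word, and appending `false` (resp. `true`) moves to
the left (resp. right) child. -/
def keplerNode (w : List Bool) : ℚ := w.foldl keplerStep (1 / 2)

/-- The binary word `0^{aₙ-2} 1 0^{a_{n-1}-1} 1 ⋯ 1 0^{a₂-1} 1 0^{a₁-1}` associated to a
continued fraction expansion `[a₁, …, aₙ]` (`false` = `0`, `true` = `1`). -/
def keplerWord : List ℕ → List Bool
  | [] => []
  | [a] => List.replicate (a - 2) false
  | a :: t => keplerWord t ++ true :: List.replicate (a - 1) false

/-!
In terms of continued fractions, passing to the left child of a node increments the first partial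
quotient, and passing to the right child prepends a `1`. Every reduced expansion arises from the
root `[2]` by such moves, and each move appends one letter to `keplerWord`. Uniqueness of the word
holds because left children lie in `(0, 1/2)`, right children lie in `(1/2, 1)`, and each of the
two moves is injective.
-/

section Foldl

variable {α β : Type*} {f : β → α → β} {b : β} {s : Set β}

theorem foldl_mem (hb : b ∈ s) (hs : ∀ x ∈ s, ∀ a, f x a ∈ s) (l : List α) : l.foldl f b ∈ s :=
  List.foldlRecOn l f hb fun x hx a _ => hs x hx a

theorem foldl_injective (hb : b ∈ s) (hs : ∀ x ∈ s, ∀ a, f x a ∈ s)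
    (hf : ∀ x ∈ s, ∀ y ∈ s, ∀ a c, f x a = f y c → x = y ∧ a = c)
    (hne : ∀ x ∈ s, ∀ a, f x a ≠ b) : Function.Injective (List.foldl f b) := by
  intro l
  induction l using List.reverseRecOn with
  | nil =>
    intro m h
    cases m using List.reverseRecOn with
    | nil => rfl
    | append_singleton m c =>
      rw [List.foldl_concat] at h
      exact absurd h.symm (hne _ (foldl_mem hb hs m) c)
  | append_singleton l a ih =>
    intro m h
    rw [List.foldl_concat] at h
    cases m using List.reverseRecOn with
    | nil => exact absurd h (hne _ (foldl_mem hb hs l) a)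
    | append_singleton m c =>
      rw [List.foldl_concat] at h
      obtain ⟨hlm, rfl⟩ := hf _ (foldl_mem hb hs l) _ (foldl_mem hb hs m) _ _ h
      rw [ih hlm]

end Foldl

section Kepler

variable {r s : ℚ}

theorem keplerStep_false (r : ℚ) : keplerStep r false = r / (r + 1) := rfl

theorem keplerStep_true (r : ℚ) : keplerStep r true = 1 / (r + 1) := rfl

theorem keplerStep_mem_Ioo (hr : 0 < r) (b : Bool) : keplerStep r b ∈ Set.Ioo 0 1 := by
  cases b
  · rw [keplerStep_false]
    exact ⟨by positivity, (div_lt_one (by positivity)).2 (by linarith)⟩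
  · rw [keplerStep_true]
    exact ⟨by positivity, (div_lt_one (by positivity)).2 (by linarith)⟩

theorem keplerStep_false_lt_half_iff (hr : -1 < r) : keplerStep r false < 1 / 2 ↔ r < 1 := by
  rw [keplerStep_false, div_lt_div_iff₀ (by linarith) two_pos]
  constructor <;> intro <;> linarith

theorem half_lt_keplerStep_true_iff (hr : -1 < r) : 1 / 2 < keplerStep r true ↔ r < 1 := by
  rw [keplerStep_true, div_lt_div_iff₀ two_pos (by linarith)]
  constructor <;> intro <;> linarith

theorem keplerStep_ne_half (hr : r ∈ Set.Ioo 0 1) (b : Bool) : keplerStep r b ≠ 1 / 2 := by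
  have hr' : -1 < r := by linarith [hr.1]
  cases b
  · exact ((keplerStep_false_lt_half_iff hr').2 hr.2).ne
  · exact ((half_lt_keplerStep_true_iff hr').2 hr.2).ne'

theorem keplerStep_left_inj (hr : r ≠ -1) (hs : s ≠ -1) {b : Bool} :
    keplerStep r b = keplerStep s b ↔ r = s := by
  have hr' : r + 1 ≠ 0 := by rwa [Ne, ← eq_neg_iff_add_eq_zero]
  have hs' : s + 1 ≠ 0 := by rwa [Ne, ← eq_neg_iff_add_eq_zero]
  cases b
  · rw [keplerStep_false, keplerStep_false, div_eq_div_iff hr' hs']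
    constructor <;> intro <;> linarith
  · rw [keplerStep_true, keplerStep_true, div_eq_div_iff hr' hs']
    constructor <;> intro <;> linarith

theorem keplerStep_inj (hr : r ∈ Set.Ioo 0 1) (hs : s ∈ Set.Ioo 0 1) {b c : Bool} :
    keplerStep r b = keplerStep s c ↔ r = s ∧ b = c := by
  have hr' : -1 < r := by linarith [hr.1]
  have hs' : -1 < s := by linarith [hs.1]
  refine ⟨fun h => ?_, fun ⟨hrs, hbc⟩ => hrs ▸ hbc ▸ rfl⟩
  obtain rfl : b = c := by
    have hrf := (keplerStep_false_lt_half_iff hr').2 hr.2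
    have hsf := (keplerStep_false_lt_half_iff hs').2 hs.2
    have hrt := (half_lt_keplerStep_true_iff hr').2 hr.2
    have hst := (half_lt_keplerStep_true_iff hs').2 hs.2
    cases b <;> cases c <;> first | rfl | linarith
  exact ⟨(keplerStep_left_inj hr'.ne' hs'.ne').1 h, rfl⟩

theorem keplerNode_append_singleton (w : List Bool) (b : Bool) :
    keplerNode (w ++ [b]) = keplerStep (keplerNode w) b :=
  List.foldl_concat ..

theorem keplerNode_injective : Function.Injective keplerNode :=
  foldl_injective (s := Set.Ioo 0 1) (by norm_num) (fun _ hr => keplerStep_mem_Ioo hr.1)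
    (fun _ hr _ hs _ _ => (keplerStep_inj hr hs).1) fun _ => keplerStep_ne_half

end Kepler

/-- The expansion `[a₁, …, aₙ]` is reduced: `n ≥ 1`, all `aᵢ ≥ 1` and `aₙ ≥ 2`. Nonemptiness is
encoded by the default value `0` of `getLastD`. -/
def IsReducedCF (a : List ℕ) : Prop :=
  (∀ x ∈ a, 1 ≤ x) ∧ 2 ≤ a.getLastD 0

/-- The Kepler tree rule on continued fraction expansions: the left child (`false`) of
`[a₁, a₂, …, aₙ]` is `[a₁ + 1, a₂, …, aₙ]` and its right child (`true`) is `[1, a₁, …, aₙ]`. -/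
def cfChild (a : List ℕ) : Bool → List ℕ
  | false => (a.headI + 1) :: a.tail
  | true => 1 :: a

namespace IsReducedCF

variable {a t : List ℕ} {x y : ℕ}

theorem ne_nil (ha : IsReducedCF a) : a ≠ [] := by
  rintro rfl
  exact absurd ha.2 (by decide)

theorem singleton_iff : IsReducedCF [x] ↔ 2 ≤ x := by
  simp only [IsReducedCF, List.mem_singleton, forall_eq, List.getLastD_cons, List.getLastD_nil]
  lia

theorem cons_cons_iff : IsReducedCF (x :: y :: t) ↔ 1 ≤ x ∧ IsReducedCF (y :: t) := by
  simp only [IsReducedCF, List.forall_mem_cons, List.getLastD_cons, and_assoc]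

theorem headI_pos (ha : IsReducedCF a) : 0 < a.headI := by
  cases a with
  | nil => exact absurd rfl ha.ne_nil
  | cons x t => exact ha.1 x List.mem_cons_self

@[elab_as_elim]
theorem induction {P : List ℕ → Prop} (root : P [2])
    (child : ∀ a b, IsReducedCF a → P a → P (cfChild a b)) (ha : IsReducedCF a) : P a := by
  induction a with
  | nil => exact absurd rfl ha.ne_nil
  | cons x t ih =>
    cases t with
    | nil =>
      induction x, singleton_iff.1 ha using Nat.le_induction with
      | base => exact root
      | succ x hx ihx =>
        have hx' := singleton_iff.2 hx
        exact child [x] false hx' (ihx hx')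
    | cons y t =>
      obtain ⟨hx, ht⟩ := cons_cons_iff.1 ha
      induction x, hx using Nat.le_induction with
      | base => exact child (y :: t) true ht (ih ht)
      | succ x hx ihx =>
        have hxt := cons_cons_iff.2 ⟨hx, ht⟩
        exact child (x :: y :: t) false hxt (ihx hxt)

end IsReducedCF

theorem cfvQ_nonneg (a : List ℕ) : 0 ≤ cfvQ a := by
  induction a with
  | nil => exact le_rfl
  | cons x t ih =>
    rw [cfvQ]
    positivity

theorem cfvQ_cfChild {a : List ℕ} (ha : 0 < a.headI) (b : Bool) :
    cfvQ (cfChild a b) = keplerStep (cfvQ a) b := by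
  cases b with
  | true => rw [cfChild, cfvQ, keplerStep_true, Nat.cast_one, add_comm]
  | false =>
    cases a with
    | nil => exact absurd ha (lt_irrefl 0)
    | cons x t =>
      have hx : (0 : ℚ) < x := Nat.cast_pos.2 ha
      have ht := cfvQ_nonneg t
      simp only [cfChild, List.headI_cons, List.tail_cons, cfvQ, keplerStep_false, Nat.cast_succ]
      field_simp
      ring

theorem sum_cfChild (a : List ℕ) (b : Bool) : (cfChild a b).sum = a.sum + 1 := by
  cases b with
  | false => rw [cfChild, List.sum_cons, add_right_comm, List.headI_add_tail_sum]
  | true => rw [cfChild, List.sum_cons, add_comm]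

theorem keplerWord_cons_of_ne_nil (x : ℕ) {t : List ℕ} (ht : t ≠ []) :
    keplerWord (x :: t) = keplerWord t ++ true :: List.replicate (x - 1) false :=
  keplerWord.eq_3 x t ht

theorem keplerWord_cfChild {a : List ℕ} (ha : IsReducedCF a) (b : Bool) :
    keplerWord (cfChild a b) = keplerWord a ++ [b] := by
  cases b with
  | true => exact keplerWord_cons_of_ne_nil 1 ha.ne_nil
  | false =>
    rcases a with _ | ⟨x, _ | ⟨y, t⟩⟩
    · exact absurd rfl ha.ne_nil
    · have hx : x + 1 - 2 = x - 2 + 1 := by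
        have := IsReducedCF.singleton_iff.1 ha
        lia
      simp only [cfChild, List.headI_cons, List.tail_cons, keplerWord, hx, List.replicate_succ']
    · have hx : x + 1 - 1 = x - 1 + 1 := by
        have := (IsReducedCF.cons_cons_iff.1 ha).1
        lia
      simp only [cfChild, List.headI_cons, List.tail_cons, keplerWord, hx, List.replicate_succ',
        List.append_assoc, List.cons_append]

namespace IsReducedCF

variable {a : List ℕ}

theorem keplerNode_keplerWord (ha : IsReducedCF a) : keplerNode (keplerWord a) = cfvQ a := by
  refine ha.induction ?_ fun a b ha ih => ?_
  · norm_num [keplerNode, keplerWord, cfvQ]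
  · rw [keplerWord_cfChild ha, keplerNode_append_singleton, ih, cfvQ_cfChild ha.headI_pos]

theorem keplerNode_keplerWord_append_singleton (ha : IsReducedCF a) (b : Bool) :
    keplerNode (keplerWord a ++ [b]) = cfvQ (cfChild a b) := by
  rw [keplerNode_append_singleton, ha.keplerNode_keplerWord, cfvQ_cfChild ha.headI_pos]

theorem length_keplerWord_add_two (ha : IsReducedCF a) : (keplerWord a).length + 2 = a.sum := by
  refine ha.induction rfl fun a b ha ih => ?_
  rw [keplerWord_cfChild ha, List.length_append, List.length_singleton, sum_cfChild, ← ih]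

end IsReducedCF

/-- Let `p/q ∈ ℚ ∩ (0,1)` have reduced continued fraction expansion `a = [a₁, …, aₙ]`
(all `aᵢ ≥ 1`, `aₙ ≥ 2`).  Then the unique binary word `w` with `keplerNode w = p/q` is
`w = 0^{aₙ-2} 1 0^{a_{n-1}-1} 1 ⋯ 1 0^{a₂-1} 1 0^{a₁-1}`, whose length — the level of the
Kepler tree at which `p/q` occurs — is `a₁ + ⋯ + aₙ - 2`.  Equivalently, moving to the left
child replaces `[a₁, a₂, …, aₙ]` by `[a₁+1, a₂, …, aₙ]` and moving to the right child
replaces it by `[1, a₁, a₂, …, aₙ]`. -/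
theorem keplerWord_spec (a : List ℕ) (ha : a ≠ []) (h1 : ∀ x ∈ a, 1 ≤ x)
    (h2 : 2 ≤ a.getLastD 0) :
    (∀ w : List Bool, keplerNode w = cfvQ a ↔ w = keplerWord a) ∧
    (keplerWord a).length = a.sum - 2 ∧
    keplerNode (keplerWord a ++ [false]) = cfvQ ((a.headI + 1) :: a.tail) ∧
    keplerNode (keplerWord a ++ [true]) = cfvQ (1 :: a) := by
  have hred : IsReducedCF a := ⟨h1, h2⟩
  refine ⟨fun w => ?_, Nat.eq_sub_of_add_eq hred.length_keplerWord_add_two,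
    hred.keplerNode_keplerWord_append_singleton false,
    hred.keplerNode_keplerWord_append_singleton true⟩
  rw [← hred.keplerNode_keplerWord, keplerNode_injective.eq_iff]
end

section
/- Let ℱ = (a_j)_{j≥1} be the infinite sequence of positive integers obtained by concatenating the reduced continued fraction expansions of the rationals of the Farey tree read top-down, left-to-right (i.e., level by level, left to right within each level). Then ℱ is Minkowski normal: for every k ≥ 1 and every block d = (d_1, …, d_k) of positive integers, the asymptotic frequency of occurrences of d among the first n digits of ℱ tends to 2^{−(d_1 + ⋯ + d_k)} as n → ∞. -/
/-- Farey tree rule (on reduced continued fraction expansions): replace the last digit `aₙ`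
by `aₙ + 1`. -/
def fareyBump (a : List ℕ) : List ℕ := a.dropLast ++ [a.getLastD 0 + 1]

/-- Farey tree rule (on reduced continued fraction expansions): replace the last digit `aₙ`
by `aₙ - 1, 2`. -/
def fareySplit (a : List ℕ) : List ℕ := a.dropLast ++ [a.getLastD 0 - 1, 2]

/-- The Farey tree rule: a node `[a₁, …, aₙ]` with `n` odd has left child `[a₁, …, aₙ + 1]`
and right child `[a₁, …, aₙ - 1, 2]`, while for `n` even the left child is
`[a₁, …, aₙ - 1, 2]` and the right child is `[a₁, …, aₙ + 1]`.
(`false` = left child, `true` = right child.) -/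
def fareyChild (a : List ℕ) (b : Bool) : List ℕ :=
  if a.length % 2 = 1 then (if b then fareySplit a else fareyBump a)
  else (if b then fareyBump a else fareySplit a)

/-- The continued fraction expansion at the node of the Farey tree indexed by the binary
word `w` (the root `[2]`, i.e. `1/2`, is indexed by the empty word; appending `false`
(resp. `true`) moves to the left (resp. right) child). -/
def fareyNode (w : List Bool) : List ℕ := w.foldl fareyChild [2]

/-- `occCount a d n` = number of occurrences of the block `d` among the first `n` digits of
the sequence `a`: the number of (0-indexed) positions `p` with `p + d.length ≤ n` such that
the digits of `a` starting at position `p` spell out `d`.  (Positions `p = i - 1` for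
`1 ≤ i ≤ n - d.length + 1`.) -/
noncomputable def occCount (a : ℕ → ℕ) (d : List ℕ) (n : ℕ) : ℕ :=
  Set.ncard {p : ℕ | p + d.length ≤ n ∧ ∀ j < d.length, a (p + j) = d.getD j 0}

/-- A sequence of positive integer digits is *Minkowski normal* if every nonempty block
`d = (d₁, …, d_k)` of positive integers occurs with asymptotic frequency
`2^{-(d₁ + ⋯ + d_k)}`. -/
def MinkowskiNormalSeq (a : ℕ → ℕ) : Prop :=
  ∀ d : List ℕ, d ≠ [] → (∀ x ∈ d, 0 < x) →
    Filter.Tendsto (fun n => (occCount a d n : ℝ) / n) Filter.atTop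
      (nhds (((2 : ℝ) ^ d.sum)⁻¹))

/-- The top-down, left-to-right enumeration of the Farey tree (by continued fraction
expansions): the root is `fareyIdx 1 = [2]` and the children of `fareyIdx n` are
`fareyIdx (2n)` (left) and `fareyIdx (2n+1)` (right).  (`fareyIdx 0` is junk.) -/
def fareyIdx (n : ℕ) : List ℕ :=
  if n ≤ 1 then [2]
  else fareyChild (fareyIdx (n / 2)) (decide (n % 2 = 1))
  termination_by n
  decreasing_by exact Nat.div_lt_self (by omega) (by norm_num)

/-- The infinite digit sequence `ℱ` obtained by concatenating the reduced continued
fraction expansions of the rationals of the Farey tree read top-down, left-to-right;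
`fareyDigits n` is its `(n+1)`-st digit.  (Each expansion is nonempty, so the concatenation
of the first `n + 1` expansions has more than `n` digits.) -/
def fareyDigits (n : ℕ) : ℕ := ((List.range (n + 1)).flatMap fun i => fareyIdx (i + 1)).getD n 0

/-!
Lowering the last digit of every node by one turns the Farey tree into the tree of compositions: the
children of `(c₁, …, cₙ)` are `(c₁, …, cₙ + 1)` and `(c₁, …, cₙ, 1)`. Hence, for a nonempty block
`d`, the children whose composition ends with `d` correspond to the parents whose composition ends
with the block of sum `d.sum - 1` obtained by lowering the last part of `d` (or deleting it, if it
is `1`). As there are twice as many children as parents, induction on `d` gives density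
`2 ^ (-d.sum)` to the nodes whose composition ends with `d`, up to a bounded error in the count.

Leaving out the last digit of each expansion, passing from the first `T` nodes to their children
doubles the number of occurrences of `d` and adds one for each node whose composition ends with `d`.
So the first `T` expansions contain the expected number of occurrences up to `O(T)`. They have at
least `T log₂ T / 4` digits altogether, which makes this error negligible, as well as those from the
last digits and from the blocks that straddle consecutive expansions.
-/

open Filter Finset Topology

lemma concat_suffix_concat_iff {α : Type*} {d t : List α} {x y : α} :
    d ++ [x] <:+ t ++ [y] ↔ d <:+ t ∧ x = y := by
  rw [← List.reverse_prefix, List.reverse_append, List.reverse_append]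
  simp [List.cons_prefix_cons, and_comm]

lemma suffix_map_range_add_length_iff {α : Type*} (a : ℕ → α) (d : List α) (p : ℕ) :
    d <:+ (List.range (p + d.length)).map a ↔
      ∀ j (hj : j < d.length), a (p + j) = d[j] := by
  rw [List.suffix_iff_eq_drop, List.length_map, List.length_range, Nat.add_sub_cancel]
  constructor
  · intro h j hj
    rw [List.getElem_of_eq h hj]
    simp
  · intro h
    exact List.ext_getElem (by simp) fun j hj _ => by simp [h j hj]

lemma exists_tendsto_atTop_le_lt_succ {α : Type*} [LinearOrder α] [OrderBot α] [NoMaxOrder α]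
    {u : ℕ → α} (hmono : Monotone u) (hu : Tendsto u atTop atTop) (h0 : u 0 = ⊥) :
    ∃ τ : α → ℕ, Tendsto τ atTop atTop ∧ ∀ x, u (τ x) ≤ x ∧ x < u (τ x + 1) := by
  have hex (x : α) : ∃ k, u k ≤ x ∧ x < u (k + 1) := by
    classical
    have hgt : ∃ k, x < u k := (hu.eventually_gt_atTop x).exists
    obtain ⟨k, hk⟩ : ∃ k, Nat.find hgt = k + 1 := Nat.exists_eq_succ_of_ne_zero fun hzero =>
      not_lt_bot (h0 ▸ hzero ▸ Nat.find_spec hgt)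
    exact ⟨k, not_lt.mp (Nat.find_min hgt (by omega)), hk ▸ Nat.find_spec hgt⟩
  choose τ hτ using hex
  refine ⟨τ, tendsto_atTop.mpr fun k => ?_, hτ⟩
  filter_upwards [eventually_ge_atTop (u k)] with x hx
  by_contra! hlt
  exact absurd ((hτ x).2.trans_le (hmono hlt)) hx.not_gt

lemma le_four_mul_of_le_two_mul_div_two_add_log {u : ℕ → ℝ} {c : ℝ} (hc : 0 ≤ c) (h0 : u 0 ≤ 0)
    (hu : ∀ n ≠ 0, u n ≤ 2 * u (n / 2) + c * (Nat.log 2 n + 1)) (n : ℕ) :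
    u n ≤ 4 * c * n := by
  -- The lower-order correction absorbs the logarithm, so that the induction closes.
  have hcorrected : ∀ n ≠ 0, u n ≤ c * (4 * n - Nat.log 2 n - 3) := by
    intro n
    induction n using Nat.strong_induction_on with
    | _ n ih =>
      intro hn
      rcases (Nat.one_le_iff_ne_zero.mpr hn).eq_or_lt with rfl | h2
      · have h1 := hu 1 one_ne_zero
        norm_num at h1 ⊢
        linarith
      · have hhalf := ih (n / 2) (by omega) (by omega)
        have hlog : (Nat.log 2 n : ℝ) = Nat.log 2 (n / 2) + 1 :=
          mod_cast Nat.log_of_one_lt_of_le one_lt_two h2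
        have hdiv : 2 * ((n / 2 : ℕ) : ℝ) ≤ n := mod_cast Nat.mul_div_le n 2
        calc u n ≤ 2 * u (n / 2) + c * (Nat.log 2 n + 1) := hu n hn
          _ ≤ 2 * (c * (4 * (n / 2 : ℕ) - Nat.log 2 (n / 2) - 3)) + c * (Nat.log 2 n + 1) := by
            linarith
          _ = c * (4 * (2 * (n / 2 : ℕ)) - Nat.log 2 n - 3) := by
            rw [hlog]
            ring
          _ ≤ c * (4 * n - Nat.log 2 n - 3) := by gcongr
  rcases eq_or_ne n 0 with rfl | hn
  · simpa using h0
  · refine (hcorrected n hn).trans ?_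
    rw [mul_comm 4 c, mul_assoc]
    exact mul_le_mul_of_nonneg_left (by linarith [(Nat.log 2 n).cast_nonneg (α := ℝ)]) hc

section BlockCount

variable {α : Type*} [DecidableEq α]

/-- Number of occurrences of the block `d` in the list `l`. An occurrence is recorded at its last
letter, so that the empty block occurs `l.length` times. -/
def blockCount (d l : List α) : ℕ :=
  Nat.count (fun j => d <:+ l.take (j + 1)) l.length

lemma blockCount_nil (d : List α) : blockCount d [] = 0 := rfl

lemma blockCount_append (d l₁ l₂ : List α) :
    blockCount d (l₁ ++ l₂) =
      blockCount d l₁ + Nat.count (fun j => d <:+ l₁ ++ l₂.take (j + 1)) l₂.length := by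
  rw [blockCount, List.length_append, Nat.count_add, blockCount]
  congr 1
  · simp only [Nat.count_eq_card_filter_range]
    refine congrArg card (filter_congr fun j hj => ?_)
    rw [List.take_append_of_le_length (by simpa using hj)]
  · simp only [add_assoc, List.take_length_add_append]

lemma blockCount_concat (d l : List α) (x : α) :
    blockCount d (l ++ [x]) = blockCount d l + if d <:+ l ++ [x] then 1 else 0 := by
  simp [blockCount_append, Nat.count_succ]

lemma blockCount_add_le_blockCount_append (d l₁ l₂ : List α) :
    blockCount d l₁ + blockCount d l₂ ≤ blockCount d (l₁ ++ l₂) := by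
  rw [blockCount_append]
  exact Nat.add_le_add_left
    (Nat.count_mono_left fun _ _ h => h.trans (List.suffix_append _ _)) _

lemma blockCount_append_le_add_length (d l₁ l₂ : List α) :
    blockCount d (l₁ ++ l₂) ≤ blockCount d l₁ + l₂.length := by
  rw [blockCount_append]
  exact Nat.add_le_add_left (Nat.count_le _) _

lemma blockCount_append_le (d l₁ l₂ : List α) :
    blockCount d (l₁ ++ l₂) ≤ blockCount d l₁ + blockCount d l₂ + d.length := by
  rw [blockCount_append, add_assoc]
  refine Nat.add_le_add_left ?_ _
  have hsub : {j ∈ range l₂.length | d <:+ l₁ ++ l₂.take (j + 1)} ⊆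
      {j ∈ range l₂.length | d <:+ l₂.take (j + 1)} ∪ range d.length := by
    intro j hj
    simp only [mem_union, mem_filter, mem_range] at hj ⊢
    by_cases hd : j < d.length
    · exact Or.inr hd
    · refine Or.inl ⟨hj.1, List.suffix_of_suffix_length_le hj.2 (List.suffix_append _ _) ?_⟩
      rw [List.length_take]
      omega
  simpa only [blockCount, Nat.count_eq_card_filter_range, card_range] using
    (card_le_card hsub).trans (card_union_le _ _)

end BlockCount

lemma occCount_eq_blockCount_map_range (a : ℕ → ℕ) {d : List ℕ} (hd : d ≠ []) (n : ℕ) :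
    occCount a d n = blockCount d ((List.range n).map a) := by
  have hpos : 0 < d.length := List.length_pos_iff.mpr hd
  have hcount : blockCount d ((List.range n).map a) =
      Set.ncard {j | j < n ∧ d <:+ (List.range (j + 1)).map a} := by
    rw [blockCount, Nat.count_eq_card_filter_range, ← Set.ncard_coe_finset]
    congr 1
    ext j
    simp only [List.length_map, List.length_range, coe_filter, mem_range, Set.mem_ofPred_eq]
    refine and_congr_right fun hj => ?_
    rw [← List.map_take, List.take_range, min_eq_left (by omega)]
  have hmatch (p : ℕ) : (∀ j < d.length, a (p + j) = d.getD j 0) ↔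
      d <:+ (List.range (p + d.length)).map a := by
    rw [suffix_map_range_add_length_iff]
    exact forall₂_congr fun j hj => by rw [List.getD_eq_getElem _ _ hj]
  rw [hcount, occCount]
  simp only [hmatch]
  refine Set.ncard_congr (fun p _ => p + d.length - 1) ?_ ?_ ?_
  · rintro p ⟨hp, h⟩
    exact ⟨by omega, by rwa [Nat.sub_add_cancel (by omega)]⟩
  · intro p q _ _ h
    omega
  · rintro j ⟨hj, h⟩
    have hle : d.length ≤ j + 1 := by simpa using h.length_le
    refine ⟨j + 1 - d.length, ⟨by omega, ?_⟩, by omega⟩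
    rwa [Nat.sub_add_cancel hle]

section Discrepancy

/-- Number of occurrences of the block `d` in `l` minus the number `l.length / 2 ^ d.sum` expected
from the Minkowski frequency of `d`. -/
noncomputable def discrepancy (d l : List ℕ) : ℝ :=
  blockCount d l - l.length / 2 ^ d.sum

variable (d l l₁ l₂ : List ℕ)

lemma discrepancy_nil : discrepancy d [] = 0 := by
  simp [discrepancy, blockCount_nil]

lemma discrepancy_concat (x : ℕ) :
    discrepancy d (l ++ [x]) =
      discrepancy d l + ((if d <:+ l ++ [x] then 1 else 0) - 1 / 2 ^ d.sum) := by
  simp only [discrepancy, blockCount_concat, List.length_append, List.length_singleton]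
  push_cast
  ring

lemma abs_discrepancy_append_sub_add_le :
    |discrepancy d (l₁ ++ l₂) - (discrepancy d l₁ + discrepancy d l₂)| ≤ d.length := by
  have hge : (blockCount d l₁ + blockCount d l₂ : ℝ) ≤ blockCount d (l₁ ++ l₂) :=
    mod_cast blockCount_add_le_blockCount_append d l₁ l₂
  have hle : (blockCount d (l₁ ++ l₂) : ℝ) ≤ blockCount d l₁ + blockCount d l₂ + d.length :=
    mod_cast blockCount_append_le d l₁ l₂
  simp only [discrepancy, List.length_append, Nat.cast_add, add_div]
  rw [abs_le]
  constructor <;> linarith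

lemma abs_discrepancy_append_sub_le :
    |discrepancy d (l₁ ++ l₂) - discrepancy d l₁| ≤ l₂.length := by
  have hge : (blockCount d l₁ : ℝ) ≤ blockCount d (l₁ ++ l₂) :=
    mod_cast (Nat.le_add_right _ _).trans (blockCount_add_le_blockCount_append d l₁ l₂)
  have hle : (blockCount d (l₁ ++ l₂) : ℝ) ≤ blockCount d l₁ + l₂.length :=
    mod_cast blockCount_append_le_add_length d l₁ l₂
  have hfreq : (l₂.length : ℝ) / 2 ^ d.sum ≤ l₂.length :=
    div_le_self (by positivity) (one_le_pow₀ one_le_two)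
  have hfreq_nonneg : (0 : ℝ) ≤ l₂.length / 2 ^ d.sum := by positivity
  simp only [discrepancy, List.length_append, Nat.cast_add, add_div]
  rw [abs_le]
  constructor <;> linarith

lemma abs_discrepancy_le_length : |discrepancy d l| ≤ l.length := by
  simpa [discrepancy_nil] using abs_discrepancy_append_sub_le d [] l

end Discrepancy

section FareyTree

lemma fareyIdx_one : fareyIdx 1 = [2] := by
  rw [fareyIdx, if_pos le_rfl]

lemma fareyIdx_two_mul {n : ℕ} (hn : n ≠ 0) :
    fareyIdx (2 * n) = fareyChild (fareyIdx n) false := by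
  rw [fareyIdx, if_neg (by omega), Nat.mul_div_cancel_left n two_pos,
    decide_eq_false (by omega)]

lemma fareyIdx_two_mul_add_one {n : ℕ} (hn : n ≠ 0) :
    fareyIdx (2 * n + 1) = fareyChild (fareyIdx n) true := by
  rw [fareyIdx, if_neg (by omega), show (2 * n + 1) / 2 = n by omega,
    decide_eq_true (by omega)]

lemma fareyBump_concat (t : List ℕ) (x : ℕ) : fareyBump (t ++ [x]) = t ++ [x + 1] := by
  simp [fareyBump]

lemma fareySplit_concat (t : List ℕ) (x : ℕ) :
    fareySplit (t ++ [x + 1]) = (t ++ [x]) ++ [2] := by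
  simp [fareySplit]

lemma fareyChild_eq_bump_or_split (a : List ℕ) (b : Bool) :
    fareyChild a b = fareyBump a ∨ fareyChild a b = fareySplit a := by
  unfold fareyChild
  split_ifs <;> simp

lemma fareyIdx_eq_bump_or_split {n : ℕ} (hn : 2 ≤ n) :
    fareyIdx n = fareyBump (fareyIdx (n / 2)) ∨ fareyIdx n = fareySplit (fareyIdx (n / 2)) := by
  rw [fareyIdx, if_neg (by omega)]
  exact fareyChild_eq_bump_or_split _ _

lemma exists_fareyIdx_eq_concat (n : ℕ) : ∃ t x, fareyIdx n = t ++ [x + 2] := by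
  induction n using Nat.strong_induction_on with
  | _ n ih =>
    rcases le_or_gt n 1 with hn | hn
    · exact ⟨[], 0, by rw [fareyIdx, if_pos hn]; rfl⟩
    · obtain ⟨t, x, h⟩ := ih (n / 2) (by omega)
      rcases fareyIdx_eq_bump_or_split hn with hbump | hsplit
      · exact ⟨t, x + 1, by rw [hbump, h, fareyBump_concat]⟩
      · exact ⟨t ++ [x + 1], 0, by rw [hsplit, h, fareySplit_concat]⟩

lemma fareyIdx_ne_nil (n : ℕ) : fareyIdx n ≠ [] := by
  obtain ⟨t, x, h⟩ := exists_fareyIdx_eq_concat n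
  simp [h]

lemma length_fareyIdx_le (n : ℕ) : (fareyIdx n).length ≤ Nat.log 2 n + 1 := by
  induction n using Nat.strong_induction_on with
  | _ n ih =>
    rcases le_or_gt n 1 with hn | hn
    · simp [fareyIdx, hn]
    · have hlog : Nat.log 2 n = Nat.log 2 (n / 2) + 1 := Nat.log_of_one_lt_of_le one_lt_two hn
      have hparent := ih (n / 2) (by omega)
      obtain ⟨t, x, h⟩ := exists_fareyIdx_eq_concat (n / 2)
      rcases fareyIdx_eq_bump_or_split hn with hchild | hchild <;>
      · rw [h] at hparent hchild
        simp only [hchild, fareyBump_concat, fareySplit_concat, List.length_append,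
          List.length_singleton] at hparent ⊢
        omega

end FareyTree

section FareySum

variable {M : Type*} [AddCommMonoid M]

/-- Sum of `f` over the first `T` nodes of the Farey tree in the top-down, left-to-right order. -/
def fareySum (f : List ℕ → M) (T : ℕ) : M :=
  ∑ n ∈ range T, f (fareyIdx (n + 1))

lemma fareySum_succ (f : List ℕ → M) (T : ℕ) :
    fareySum f (T + 1) = fareySum f T + f (fareyIdx (T + 1)) :=
  sum_range_succ _ _

lemma fareySum_congr {f g : List ℕ → M} (h : ∀ t x, f (t ++ [x + 2]) = g (t ++ [x + 2])) :
    fareySum f = fareySum g := by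
  funext T
  refine sum_congr rfl fun n _ => ?_
  obtain ⟨t, x, hn⟩ := exists_fareyIdx_eq_concat (n + 1)
  rw [hn, h]

lemma apply_fareyChild_false_add_apply_fareyChild_true (f : List ℕ → M) (a : List ℕ) :
    f (fareyChild a false) + f (fareyChild a true) = f (fareyBump a) + f (fareySplit a) := by
  by_cases h : a.length % 2 = 1
  · simp [fareyChild, h]
  · simp [fareyChild, h, add_comm]

lemma fareySum_two_mul_add_one (f : List ℕ → M) (T : ℕ) :
    fareySum f (2 * T + 1) =
      f [2] + fareySum (fun a => f (fareyBump a) + f (fareySplit a)) T := by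
  induction T with
  | zero => simp [fareySum, fareyIdx_one]
  | succ T ih =>
    rw [show 2 * (T + 1) + 1 = 2 * T + 1 + 1 + 1 by ring, fareySum_succ, fareySum_succ, ih,
      fareySum_succ, show 2 * T + 1 + 1 = 2 * (T + 1) by ring,
      fareyIdx_two_mul T.succ_ne_zero, fareyIdx_two_mul_add_one T.succ_ne_zero,
      ← apply_fareyChild_false_add_apply_fareyChild_true]
    simp only [add_assoc]

lemma fareySum_eq_fareySum_div_two {G : Type*} [AddCommGroup G] (f : List ℕ → G) (T : ℕ) :
    fareySum f T = f [2] + fareySum (fun a => f (fareyBump a) + f (fareySplit a)) (T / 2) -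
      if Even T then f (fareyIdx (T + 1)) else 0 := by
  rw [← fareySum_two_mul_add_one]
  rcases Nat.even_or_odd T with h | h
  · rw [if_pos h, Nat.two_mul_div_two_of_even h, fareySum_succ, add_sub_cancel_right]
  · rw [if_neg (Nat.not_even_iff_odd.mpr h), Nat.two_mul_div_two_add_one_of_odd h, sub_zero]

lemma abs_fareySum_sub_mul_half_le {f g : List ℕ → ℝ} {q B : ℝ}
    (hf : ∀ a, f a ∈ Set.Icc 0 1) (hq : q ∈ Set.Icc 0 1)
    (hfg : ∀ t x, f (fareyBump (t ++ [x + 2])) + f (fareySplit (t ++ [x + 2])) = g (t ++ [x + 2]))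
    (hg : ∀ T : ℕ, |fareySum g T - T * q| ≤ B) (T : ℕ) :
    |fareySum f T - T * (q / 2)| ≤ B + 1 := by
  obtain ⟨hroot_nonneg, hroot_le⟩ := hf [2]
  obtain ⟨hnext_nonneg, hnext_le⟩ := hf (fareyIdx (T + 1))
  obtain ⟨hq_nonneg, hq_le⟩ := hq
  have hhalf := abs_le.mp (hg (T / 2))
  rw [fareySum_eq_fareySum_div_two, fareySum_congr hfg, abs_le]
  rcases Nat.even_or_odd T with hT | hT
  · have hhalf_mul : (T : ℝ) * (q / 2) = (T / 2 : ℕ) * q := by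
      have hcast : (T : ℝ) = 2 * (T / 2 : ℕ) := mod_cast (Nat.two_mul_div_two_of_even hT).symm
      rw [hcast]
      ring
    rw [if_pos hT, hhalf_mul]
    constructor <;> linarith
  · have hhalf_mul : (T : ℝ) * (q / 2) = (T / 2 : ℕ) * q + q / 2 := by
      have hcast : (T : ℝ) = 2 * (T / 2 : ℕ) + 1 :=
        mod_cast (Nat.two_mul_div_two_add_one_of_odd hT).symm
      rw [hcast]
      ring
    rw [if_neg (Nat.not_even_iff_odd.mpr hT), hhalf_mul]
    constructor <;> linarith

end FareySum

section Composition

/-- The composition of `k` attached to a node `a` at depth `k` (the root having depth `1`):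
the last digit of `a` lowered by one. -/
def fareyComposition (a : List ℕ) : List ℕ := a.dropLast ++ [a.getLastD 0 - 1]

lemma fareyComposition_concat (t : List ℕ) (x : ℕ) :
    fareyComposition (t ++ [x + 1]) = t ++ [x] := by
  simp [fareyComposition]

/-- Indicator of the nodes whose composition ends with the block `d`. -/
def suffixIndicator (d a : List ℕ) : ℝ :=
  if d <:+ fareyComposition a then 1 else 0

lemma suffixIndicator_mem_Icc (d a : List ℕ) : suffixIndicator d a ∈ Set.Icc 0 1 := by
  unfold suffixIndicator
  split_ifs <;> simp

lemma suffixIndicator_nil : suffixIndicator [] = 1 := by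
  funext a
  simp [suffixIndicator]

variable (p t : List ℕ) (x : ℕ)

lemma suffixIndicator_concat_one_bump_add_split :
    suffixIndicator (p ++ [1]) (fareyBump (t ++ [x + 2])) +
        suffixIndicator (p ++ [1]) (fareySplit (t ++ [x + 2])) =
      suffixIndicator p (t ++ [x + 2]) := by
  simp [suffixIndicator, fareyBump_concat, fareySplit_concat, fareyComposition_concat,
    concat_suffix_concat_iff, -List.append_assoc]

lemma suffixIndicator_concat_add_two_bump_add_split (z : ℕ) :
    suffixIndicator (p ++ [z + 2]) (fareyBump (t ++ [x + 2])) +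
        suffixIndicator (p ++ [z + 2]) (fareySplit (t ++ [x + 2])) =
      suffixIndicator (p ++ [z + 1]) (t ++ [x + 2]) := by
  simp [suffixIndicator, fareyBump_concat, fareySplit_concat, fareyComposition_concat,
    concat_suffix_concat_iff, -List.append_assoc]

lemma abs_fareySum_suffixIndicator_sub_le {d : List ℕ} (hpos : ∀ x ∈ d, 0 < x) (T : ℕ) :
    |fareySum (suffixIndicator d) T - T * ((2 : ℝ) ^ d.sum)⁻¹| ≤ d.sum := by
  have hfreq (s : ℕ) : ((2 : ℝ) ^ s)⁻¹ ∈ Set.Icc 0 1 :=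
    ⟨by positivity, inv_le_one_of_one_le₀ (one_le_pow₀ one_le_two)⟩
  induction d using List.reverseRecOn generalizing T with
  | nil => simp [suffixIndicator_nil, fareySum]
  | append_singleton p y ih =>
    have hp := ih fun x hx => hpos x (by simp [hx])
    obtain ⟨z, rfl⟩ := Nat.exists_eq_succ_of_ne_zero (hpos y (by simp)).ne'
    clear ih hpos
    induction z generalizing T with
    | zero =>
      rw [List.sum_append, List.sum_singleton, pow_succ, mul_inv, ← div_eq_mul_inv, Nat.cast_succ]
      exact abs_fareySum_sub_mul_half_le (suffixIndicator_mem_Icc _) (hfreq _)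
        (suffixIndicator_concat_one_bump_add_split p) hp T
    | succ z ihz =>
      have hsum : (p ++ [z + 2]).sum = (p ++ [z + 1]).sum + 1 := by
        simp only [List.sum_append, List.sum_singleton, add_assoc]
      rw [hsum, pow_succ, mul_inv, ← div_eq_mul_inv, Nat.cast_succ]
      exact abs_fareySum_sub_mul_half_le (suffixIndicator_mem_Icc _) (hfreq _)
        (fun t x => suffixIndicator_concat_add_two_bump_add_split p t x z) ihz T

end Composition

section NodeDiscrepancy

variable (d : List ℕ)

lemma discrepancy_dropLast_bump_add_split (t : List ℕ) (x : ℕ) :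
    discrepancy d (fareyBump (t ++ [x + 2])).dropLast +
        discrepancy d (fareySplit (t ++ [x + 2])).dropLast =
      2 * discrepancy d (t ++ [x + 2]).dropLast +
        (suffixIndicator d (t ++ [x + 2]) - 1 / 2 ^ d.sum) := by
  simp only [fareyBump_concat, fareySplit_concat, List.dropLast_concat, discrepancy_concat,
    suffixIndicator, fareyComposition_concat]
  ring

lemma abs_discrepancy_dropLast_fareyIdx_le (n : ℕ) :
    |discrepancy d (fareyIdx n).dropLast| ≤ Nat.log 2 n := by
  refine (abs_discrepancy_le_length _ _).trans ?_
  rw [List.length_dropLast]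
  exact_mod_cast Nat.sub_le_of_le_add (length_fareyIdx_le n)

lemma fareySum_discrepancy_dropLast (T : ℕ) :
    fareySum (fun a => discrepancy d a.dropLast) T =
      2 * fareySum (fun a => discrepancy d a.dropLast) (T / 2) +
        (fareySum (suffixIndicator d) (T / 2) - (T / 2 : ℕ) * ((2 : ℝ) ^ d.sum)⁻¹) -
        if Even T then discrepancy d (fareyIdx (T + 1)).dropLast else 0 := by
  rw [fareySum_eq_fareySum_div_two, fareySum_congr
    (g := fun a => 2 * discrepancy d a.dropLast + (suffixIndicator d a - 1 / 2 ^ d.sum))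
    (discrepancy_dropLast_bump_add_split d)]
  simp [fareySum, sum_add_distrib, mul_sum, discrepancy_nil]

lemma abs_fareySum_discrepancy_dropLast_le {d : List ℕ} (hpos : ∀ x ∈ d, 0 < x) (T : ℕ) :
    |fareySum (fun a => discrepancy d a.dropLast) T| ≤ 4 * (d.sum + 1) * T := by
  refine le_four_mul_of_le_two_mul_div_two_add_log
    (u := fun T => |fareySum (fun a => discrepancy d a.dropLast) T|) (by positivity)
    (by simp [fareySum]) (fun T hT => ?_) T
  have hlog : (Nat.log 2 (T + 1) : ℝ) ≤ Nat.log 2 T + 1 := by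
    have h := Nat.log_mono_right (b := 2) (by omega : T + 1 ≤ T * 2)
    rw [Nat.log_mul_base one_lt_two hT] at h
    exact_mod_cast h
  have hnext : |if Even T then discrepancy d (fareyIdx (T + 1)).dropLast else 0| ≤
      (Nat.log 2 T + 1 : ℝ) := by
    split_ifs
    · exact (abs_discrepancy_dropLast_fareyIdx_le d (T + 1)).trans hlog
    · rw [abs_zero]
      positivity
  have hparents := abs_fareySum_suffixIndicator_sub_le hpos (T / 2)
  have hsum_mul_log : (0 : ℝ) ≤ d.sum * Nat.log 2 T := by positivity
  rw [fareySum_discrepancy_dropLast]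
  refine (abs_sub _ _).trans ((add_le_add_left (abs_add_le _ _) _).trans ?_)
  rw [abs_mul, abs_two]
  linarith

end NodeDiscrepancy

section Concatenation

/-- Concatenation of the expansions of the first `T` nodes of the Farey tree. -/
def fareyConcat (T : ℕ) : List ℕ :=
  (List.range T).flatMap fun i => fareyIdx (i + 1)

lemma fareyConcat_succ (T : ℕ) : fareyConcat (T + 1) = fareyConcat T ++ fareyIdx (T + 1) := by
  simp [fareyConcat, List.range_succ]

lemma fareyConcat_prefix {S T : ℕ} (h : S ≤ T) : fareyConcat S <+: fareyConcat T := by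
  induction T, h using Nat.le_induction with
  | base => exact List.prefix_rfl
  | succ T _ ih =>
    rw [fareyConcat_succ]
    exact ih.trans (List.prefix_append _ _)

lemma length_fareyConcat (T : ℕ) : (fareyConcat T).length = fareySum List.length T := by
  induction T with
  | zero => rfl
  | succ T ih => rw [fareyConcat_succ, fareySum_succ, List.length_append, ih]

lemma strictMono_length_fareyConcat : StrictMono fun T => (fareyConcat T).length :=
  strictMono_nat_of_lt_succ fun T => by
    rw [fareyConcat_succ, List.length_append]
    exact Nat.lt_add_of_pos_right (List.length_pos_iff.mpr (fareyIdx_ne_nil _))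

lemma fareyDigits_eq_getElem {T j : ℕ} (h : j < (fareyConcat T).length) :
    fareyDigits j = (fareyConcat T)[j] := by
  have hj : j < (fareyConcat (j + 1)).length := strictMono_length_fareyConcat.id_le (j + 1)
  have hdigit : fareyDigits j = (fareyConcat (j + 1))[j] := List.getD_eq_getElem _ _ hj
  rw [hdigit]
  rcases le_total (j + 1) T with hT | hT
  · exact (fareyConcat_prefix hT).getElem hj
  · exact ((fareyConcat_prefix hT).getElem h).symm

lemma map_fareyDigits_range_length (T : ℕ) :
    (List.range (fareyConcat T).length).map fareyDigits = fareyConcat T :=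
  List.ext_getElem (by simp) fun j _ hj => by simp [fareyDigits_eq_getElem hj]

lemma length_fareyConcat_two_mul_add_one (T : ℕ) :
    (fareyConcat (2 * T + 1)).length = 2 * (fareyConcat T).length + T + 1 := by
  have hchildren (t : List ℕ) (x : ℕ) : (fareyBump (t ++ [x + 2])).length +
      (fareySplit (t ++ [x + 2])).length = 2 * (t ++ [x + 2]).length + 1 := by
    simp only [fareyBump_concat, fareySplit_concat, List.length_append, List.length_singleton]
    ring
  rw [length_fareyConcat, length_fareyConcat, fareySum_two_mul_add_one,
    fareySum_congr (g := fun a => 2 * a.length + 1) hchildren]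
  simp only [fareySum, sum_add_distrib, mul_sum, sum_const, card_range, List.length_singleton,
    smul_eq_mul, mul_one]
  ring

lemma two_mul_length_fareyConcat_two_pow_sub_one (k : ℕ) :
    2 * (fareyConcat (2 ^ k - 1)).length = k * 2 ^ k := by
  induction k with
  | zero => simp [fareyConcat]
  | succ k ih =>
    have hpow : 2 ^ (k + 1) - 1 = 2 * (2 ^ k - 1) + 1 := by
      have := Nat.one_le_two_pow (n := k)
      omega
    rw [hpow, length_fareyConcat_two_mul_add_one, add_assoc,
      Nat.sub_add_cancel Nat.one_le_two_pow, mul_add, ih]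
    ring

lemma add_one_mul_log_le_four_mul_length_fareyConcat (T : ℕ) :
    (T + 1) * Nat.log 2 (T + 1) ≤ 4 * (fareyConcat T).length := by
  set k := Nat.log 2 (T + 1)
  have hlevels : 2 ^ k - 1 ≤ T := Nat.sub_le_of_le_add (Nat.pow_log_le_self 2 T.succ_ne_zero)
  have hT : T + 1 ≤ 2 ^ k * 2 := (Nat.lt_pow_succ_log_self one_lt_two (T + 1)).le
  calc (T + 1) * k ≤ 2 ^ k * 2 * k := Nat.mul_le_mul_right k hT
    _ = 2 * (2 * (fareyConcat (2 ^ k - 1)).length) := by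
      rw [two_mul_length_fareyConcat_two_pow_sub_one]
      ring
    _ ≤ 2 * (2 * (fareyConcat T).length) :=
      Nat.mul_le_mul_left 2 (Nat.mul_le_mul_left 2 (fareyConcat_prefix hlevels).length_le)
    _ = 4 * (fareyConcat T).length := by ring

lemma tendsto_add_one_div_length_fareyConcat :
    Tendsto (fun T : ℕ => ((T : ℝ) + 1) / (fareyConcat T).length) atTop (𝓝 0) := by
  have hlog : Tendsto (fun T => (Nat.log 2 (T + 1) : ℝ)) atTop atTop :=
    tendsto_natCast_atTop_atTop.comp <| (tendsto_atTop_atTop_of_monotone Nat.log_monotone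
      fun k => ⟨2 ^ k, (Nat.log_pow one_lt_two k).ge⟩).comp (tendsto_add_atTop_nat 1)
  refine squeeze_zero' (Eventually.of_forall fun T => by positivity) ?_
    (hlog.const_div_atTop 4)
  filter_upwards [eventually_ge_atTop 1] with T hT
  have hlog_pos : 0 < Nat.log 2 (T + 1) := Nat.log_pos one_lt_two (by omega)
  have hlength_pos : 0 < (fareyConcat T).length :=
    hT.trans (strictMono_length_fareyConcat.id_le T)
  rw [div_le_div_iff₀ (mod_cast hlength_pos) (mod_cast hlog_pos)]
  exact_mod_cast add_one_mul_log_le_four_mul_length_fareyConcat T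

end Concatenation

section Normality

lemma abs_discrepancy_fareyConcat_sub_fareySum_le (d : List ℕ) (T : ℕ) :
    |discrepancy d (fareyConcat T) - fareySum (fun a => discrepancy d a.dropLast) T| ≤
      (d.length + 1) * T := by
  induction T with
  | zero => simp [fareyConcat, fareySum, discrepancy_nil]
  | succ T ih =>
    have hconcat := abs_discrepancy_append_sub_add_le d (fareyConcat T) (fareyIdx (T + 1))
    have hlast : |discrepancy d (fareyIdx (T + 1)) -
        discrepancy d (fareyIdx (T + 1)).dropLast| ≤ 1 := by
      have h := abs_discrepancy_append_sub_le d (fareyIdx (T + 1)).dropLast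
        [(fareyIdx (T + 1)).getLast (fareyIdx_ne_nil _)]
      rwa [List.dropLast_append_getLast, List.length_singleton, Nat.cast_one] at h
    rw [fareyConcat_succ, fareySum_succ]
    push_cast
    rw [abs_le] at ih hconcat hlast ⊢
    constructor <;> linarith

lemma abs_discrepancy_fareyConcat_le {d : List ℕ} (hpos : ∀ x ∈ d, 0 < x) (T : ℕ) :
    |discrepancy d (fareyConcat T)| ≤ (4 * d.sum + d.length + 5) * T := by
  have hnodes := abs_le.mp (abs_fareySum_discrepancy_dropLast_le hpos T)
  have hconcat := abs_le.mp (abs_discrepancy_fareyConcat_sub_fareySum_le d T)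
  rw [abs_le]
  constructor <;> linarith

lemma abs_discrepancy_fareyDigits_le {d : List ℕ} (hpos : ∀ x ∈ d, 0 < x) {T n : ℕ}
    (hT : (fareyConcat T).length ≤ n) (hn : n < (fareyConcat (T + 1)).length) :
    |discrepancy d ((List.range n).map fareyDigits)| ≤
      (4 * d.sum + d.length + 6) * (T + 1) := by
  obtain ⟨m, rfl⟩ := Nat.exists_eq_add_of_le hT
  have hm : (m : ℝ) ≤ T + 1 := by
    have hlength := length_fareyIdx_le (T + 1)
    have hlog := Nat.log_lt_self 2 (by omega : T + 1 ≠ 0)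
    rw [fareyConcat_succ, List.length_append] at hn
    exact_mod_cast (by omega : m ≤ T + 1)
  rw [List.range_add, List.map_append, map_fareyDigits_range_length]
  set l := ((List.range m).map ((fareyConcat T).length + ·)).map fareyDigits
  have hl : l.length = m := by simp [l]
  have hconcat := abs_le.mp (abs_discrepancy_fareyConcat_le hpos T)
  have htail := abs_le.mp (abs_discrepancy_append_sub_le d (fareyConcat T) l)
  rw [hl] at htail
  rw [abs_le]
  constructor <;> linarith [d.sum.cast_nonneg (α := ℝ), d.length.cast_nonneg (α := ℝ)]

lemma tendsto_discrepancy_fareyDigits_div {d : List ℕ} (hpos : ∀ x ∈ d, 0 < x) :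
    Tendsto (fun n : ℕ => discrepancy d ((List.range n).map fareyDigits) / n) atTop (𝓝 0) := by
  obtain ⟨τ, hτ, hbetween⟩ := exists_tendsto_atTop_le_lt_succ
    strictMono_length_fareyConcat.monotone strictMono_length_fareyConcat.tendsto_atTop rfl
  set C : ℝ := 4 * d.sum + d.length + 6
  have hbound : Tendsto (fun n => C * (((τ n : ℝ) + 1) / (fareyConcat (τ n)).length)) atTop
      (𝓝 0) := by
    simpa using (tendsto_add_one_div_length_fareyConcat.comp hτ).const_mul C
  refine squeeze_zero_norm' ?_ hbound
  filter_upwards [hτ.eventually_ge_atTop 1] with n hn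
  obtain ⟨hle, hlt⟩ := hbetween n
  have hlength_pos : (0 : ℝ) < (fareyConcat (τ n)).length :=
    mod_cast hn.trans (strictMono_length_fareyConcat.id_le (τ n))
  rw [norm_div, Real.norm_eq_abs, Real.norm_natCast, ← mul_div_assoc]
  exact div_le_div₀ (by positivity) (abs_discrepancy_fareyDigits_le hpos hle hlt) hlength_pos
    (mod_cast hle)

end Normality

/-- **The Farey concatenation `ℱ` is Minkowski normal**: for every `k ≥ 1` and every block
`d = (d₁, …, d_k)` of positive integers, the asymptotic frequency of occurrences of `d`
among the first `n` digits of `ℱ` tends to `2^{-(d₁ + ⋯ + d_k)}` as `n → ∞`. -/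
theorem fareyDigits_minkowskiNormal : MinkowskiNormalSeq fareyDigits := by
  intro d hd hpos
  have hlim := (tendsto_discrepancy_fareyDigits_div hpos).add_const ((2 : ℝ) ^ d.sum)⁻¹
  rw [zero_add] at hlim
  refine hlim.congr' ?_
  filter_upwards [eventually_ne_atTop 0] with n hn
  rw [occCount_eq_blockCount_map_range _ hd, discrepancy, List.length_map, List.length_range]
  field_simp
  ring
end
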